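/- (Recurrence and difference relations for the Tratnik functions.) Under the stated hypotheses, for all integers n₁, n₂, m₁, m₂ ≥ 0 with n₁+n₂ ≤ N and m₁+m₂ ≤ N: (i) (m₁−j⁽²⁾+j⁽³⁾)(m₁−j⁽²⁾+j⁽³⁾+1)·𝒯_{n₁,n₂}(m₁,m₂) = ψ_{n₁+1,n₂}·𝒯_{n₁+1,n₂}(m₁,m₂) + ψ⁰⁰_{n₁,n₂}·𝒯_{n₁,n₂}(m₁,m₂) + ψ_{n₁,n₂}·𝒯_{n₁−1,n₂}(m₁,m₂); (ii) (n₂−j⁽⁰⁾−j⁽⁴⁾−1)(n₂−j⁽⁰⁾−j⁽⁴⁾)·𝒯_{n₁,n₂}(m₁,m₂) = ρ^{𝔯²}_{m₁,m₂+1}·𝒯_{n₁,n₂}(m₁,m₂+1) + ρ^{𝔯²,00}_{m₁,m₂}·𝒯_{n₁,n₂}(m₁,m₂) + ρ^{𝔯²}_{m₁,m₂}·𝒯_{n₁,n₂}(m₁,m₂−1), where ρ^{𝔯²} and ρ^{𝔯²,00} denote the coefficients ρ and ρ⁰⁰ evaluated with (j⁽¹⁾,j⁽²⁾,j⁽³⁾,j⁽⁴⁾,j⁽⁰⁾)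 replaced by 𝔯²𝑱 := (j⁽²⁾, −j⁽³⁾−1, −j⁽⁴⁾−1, j⁽⁰⁾, j⁽¹⁾) (N is unchanged under this substitution), and terms with indices outside the admissible range are understood to vanish. -/

import Mathlib

noncomputable section

open Finset Real

/-- Pochhammer symbol `(y)_k = y(y+1)⋯(y+k−1)` for real `y`. -/
def poch (y : ℝ) (k : ℕ) : ℝ := ∏ i ∈ Finset.range k, (y + i)

/-- The terminating Racah function `r_n(m; α, β, −𝒩−1, δ)` on the grid `{0,…,𝒩}`:
`r_n(m) = ∑_{k=0}^{n} (−n)_k (n+α+β+1)_k (−m)_k (m−𝒩+δ)_k /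
  ((α+1)_k (β+δ+1)_k (−𝒩)_k k!)`. -/
def racah (𝒩 : ℕ) (α β δ : ℝ) (n m : ℕ) : ℝ :=
  ∑ k ∈ Finset.range (n + 1),
    (poch (-(n : ℝ)) k * poch ((n : ℝ) + α + β + 1) k * poch (-(m : ℝ)) k *
        poch ((m : ℝ) - (𝒩 : ℝ) + δ) k) /
      (poch (α + 1) k * poch (β + δ + 1) k * poch (-(𝒩 : ℝ)) k * (Nat.factorial k : ℝ))

/-- Coefficient `A_n` of the Racah recurrence relation. -/
def coeffA (𝒩 : ℕ) (α β δ : ℝ) (n : ℕ) : ℝ :=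
  ((n : ℝ) + α + 1) * ((n : ℝ) + β + δ + 1) * ((n : ℝ) - (𝒩 : ℝ)) * ((n : ℝ) + α + β + 1) /
    ((2 * (n : ℝ) + α + β + 1) * (2 * (n : ℝ) + α + β + 2))

/-- Coefficient `C_n` of the Racah recurrence relation. -/
def coeffC (𝒩 : ℕ) (α β δ : ℝ) (n : ℕ) : ℝ :=
  (n : ℝ) * ((n : ℝ) + α + β + (𝒩 : ℝ) + 1) * ((n : ℝ) + α - δ) * ((n : ℝ) + β) /
    ((2 * (n : ℝ) + α + β) * (2 * (n : ℝ) + α + β + 1))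

/-- Coefficient `B_m` of the Racah difference relation. -/
def coeffB (𝒩 : ℕ) (α β δ : ℝ) (m : ℕ) : ℝ :=
  ((m : ℝ) + α + 1) * ((m : ℝ) + β + δ + 1) * ((m : ℝ) - (𝒩 : ℝ)) * ((m : ℝ) - (𝒩 : ℝ) + δ) /
    ((2 * (m : ℝ) - (𝒩 : ℝ) + δ) * (2 * (m : ℝ) - (𝒩 : ℝ) + δ + 1))

/-- Coefficient `D_m` of the Racah difference relation. -/
def coeffD (𝒩 : ℕ) (α β δ : ℝ) (m : ℕ) : ℝ :=
  (m : ℝ) * ((m : ℝ) - (𝒩 : ℝ) - 1 - α + δ) * ((m : ℝ) - (𝒩 : ℝ) - 1 - β) * ((m : ℝ) + δ) /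
    ((2 * (m : ℝ) - (𝒩 : ℝ) - 1 + δ) * (2 * (m : ℝ) - (𝒩 : ℝ) + δ))

/-- Normalization constant `κ = (α−δ+1)_𝒩 (β+1)_𝒩 / ((α+β+2)_𝒩 (−δ)_𝒩)`. -/
def kappa (𝒩 : ℕ) (α β δ : ℝ) : ℝ :=
  poch (α - δ + 1) 𝒩 * poch (β + 1) 𝒩 / (poch (α + β + 2) 𝒩 * poch (-δ) 𝒩)

/-- The orthonormalized Racah function `𝒫_n(m; α, β, −𝒩−1, δ)`. -/
def Pfun (𝒩 : ℕ) (α β δ : ℝ) (n m : ℕ) : ℝ :=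
  Real.sqrt (kappa 𝒩 α β δ) *
    (∏ i ∈ Finset.range n,
      coeffA 𝒩 α β δ i / Real.sqrt (coeffA 𝒩 α β δ i * coeffC 𝒩 α β δ (i + 1))) *
    (∏ j ∈ Finset.range m,
      coeffB 𝒩 α β δ j / Real.sqrt (coeffB 𝒩 α β δ j * coeffD 𝒩 α β δ (j + 1))) *
    racah 𝒩 α β δ n m

/-- The positivity conditions making `𝒫_·(·; α, β, −𝒩−1, δ)` well defined. -/
def PosCond (𝒩 : ℕ) (α β δ : ℝ) : Prop :=
  (∀ i < 𝒩, 0 < coeffA 𝒩 α β δ i * coeffC 𝒩 α β δ (i + 1)) ∧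
  (∀ j < 𝒩, 0 < coeffB 𝒩 α β δ j * coeffD 𝒩 α β δ (j + 1)) ∧
  0 < kappa 𝒩 α β δ

/-- The bivariate Tratnik function
`𝒯_{n₁,n₂}(m₁,m₂) = 𝒫_{n₁}(m₁; −2j⁽²⁾−1, −2j⁽¹⁾−1, n₂−N−1, N−n₂−2j⁽²⁾+2j⁽³⁾+1)
· 𝒫_{n₂}(m₂; −2j⁽⁰⁾−1, −2j⁽⁴⁾−1, m₁−N−1, N−m₁−2j⁽⁰⁾−2j⁽¹⁾−1)`
for admissible indices, and `0` outside the admissible range. -/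
def Tratnik (j0 j1 j2 j3 j4 : ℝ) (N : ℕ) (n1 n2 m1 m2 : ℕ) : ℝ :=
  if n1 + n2 ≤ N ∧ m1 + m2 ≤ N ∧ n2 + m1 ≤ N then
    Pfun (N - n2) (-2*j2 - 1) (-2*j1 - 1) ((N : ℝ) - n2 - 2*j2 + 2*j3 + 1) n1 m1 *
      Pfun (N - m1) (-2*j0 - 1) (-2*j4 - 1) ((N : ℝ) - m1 - 2*j0 - 2*j1 - 1) n2 m2
  else 0

/-- `μ_n = (n−j⁽¹⁾−j⁽²⁾−1)(n−j⁽¹⁾−j⁽²⁾)`. -/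
def muN (j1 j2 : ℝ) (n : ℕ) : ℝ := ((n : ℝ) - j1 - j2 - 1) * ((n : ℝ) - j1 - j2)

/-- `μ̂_p = (p−j⁽⁰⁾−j⁽⁴⁾−1)(p−j⁽⁰⁾−j⁽⁴⁾)`. -/
def muP (j0 j4 : ℝ) (p : ℕ) : ℝ := ((p : ℝ) - j0 - j4 - 1) * ((p : ℝ) - j0 - j4)

/-- `μ⁽ⁱ⁾ = j⁽ⁱ⁾(j⁽ⁱ⁾+1)`. -/
def mcc (j : ℝ) : ℝ := j * (j + 1)

/-- The off-diagonal coefficient `ψ_{n,p}` of the generator `C₂₃`. -/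
def psiCo (j0 j1 j2 j3 j4 : ℝ) (N : ℕ) (n p : ℕ) : ℝ :=
  Real.sqrt (((n : ℝ) * (2*j1 + 1 - n) * (2*j2 + 1 - n) * (2*j1 + 2*j2 + 2 - n) *
      ((N : ℝ) - n - p + 2*j3 + 2) * ((N : ℝ) - n - p + 1) *
      ((p : ℝ) - n - N + 2*j1 + 2*j2 + 1) * ((n : ℝ) - p - N + 2*j0 + 2*j4)) /
    ((2*j1 + 2*j2 + 2 - 2*(n : ℝ))^2 * (2*j1 + 2*j2 + 1 - 2*(n : ℝ)) *
      (2*j1 + 2*j2 + 3 - 2*(n : ℝ))))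

/-- The off-diagonal coefficient `ρ_{n,p}` of the generator `C₃₄`. -/
def rhoCo (j0 j1 j2 j3 j4 : ℝ) (N : ℕ) (n p : ℕ) : ℝ :=
  Real.sqrt (((p : ℝ) * (2*j4 + 1 - p) * (2*j0 + 1 - p) * (2*j4 + 2*j0 + 2 - p) *
      ((N : ℝ) - n - p + 2*j3 + 2) * ((N : ℝ) - n - p + 1) *
      ((p : ℝ) - n - N + 2*j1 + 2*j2) * ((n : ℝ) - p - N + 2*j0 + 2*j4 + 1)) /
    ((2*j0 + 2*j4 + 2 - 2*(p : ℝ))^2 * (2*j0 + 2*j4 + 1 - 2*(p : ℝ)) *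
      (2*j0 + 2*j4 + 3 - 2*(p : ℝ))))

/-- The diagonal coefficient `ψ⁰⁰_{n,p}` of the generator `C₂₃`. -/
def psi00 (j0 j1 j2 j3 j4 : ℝ) (n p : ℕ) : ℝ :=
  (muN j1 j2 n + mcc j2 - mcc j1) * (muP j0 j4 p - mcc j3 - muN j1 j2 n) /
    (2 * muN j1 j2 n) + mcc j2 + mcc j3

/-- The diagonal coefficient `ρ⁰⁰_{n,p}` of the generator `C₃₄`. -/
def rho00 (j0 j1 j2 j3 j4 : ℝ) (n p : ℕ) : ℝ :=
  (muP j0 j4 p + mcc j3 - muN j1 j2 n) * (mcc j0 - mcc j4 - muP j0 j4 p) /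
    (2 * muP j0 j4 p) + mcc j3 + mcc j4

lemma poch_zero (y : ℝ) : poch y 0 = 1 := by simp [poch]

lemma poch_succ (y : ℝ) (k : ℕ) : poch y (k + 1) = poch y k * (y + k) := by
  simp [poch, Finset.prod_range_succ]

lemma poch_succ' (y : ℝ) (k : ℕ) : poch y (k + 1) = y * poch (y + 1) k := by
  simp only [poch, Finset.prod_range_succ', Nat.cast_zero, add_zero]
  rw [mul_comm]
  congr 1
  apply Finset.prod_congr rfl
  intro i _
  push_cast
  ring

lemma poch_neg_nat (n k : ℕ) (h : n < k) : poch (-(n : ℝ)) k = 0 := by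
  unfold poch
  exact Finset.prod_eq_zero (Finset.mem_range.mpr h) (by ring)

lemma poch_ne (y : ℝ) (k : ℕ) (h : ∀ i < k, y + (i : ℝ) ≠ 0) : poch y k ≠ 0 := by
  unfold poch
  exact Finset.prod_ne_zero_iff.mpr fun i hi => h i (Finset.mem_range.mp hi)

/-- The basis functions in the degree variable. -/
def tb (u x : ℝ) (k : ℕ) : ℝ := poch (-x) k * poch (x + u) k

lemma t_rec0 (x u A C : ℝ) :
    A * (tb u (x + 1) 0 - tb u x 0) + C * (tb u (x - 1) 0 - tb u x 0) = 0 := by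
  simp [tb, poch_zero]

lemma t_rec (x u a b c v A C : ℝ) (hv : v = a + b + c - u - 1)
    (h1 : 2 * x + u - 1 ≠ 0) (h2 : 2 * x + u ≠ 0)
    (hC : C = x * (x + u - a) * (x + u - b) * (x + u - c) / ((2 * x + u - 1) * (2 * x + u)))
    (hA : (2 * x + u + 1 ≠ 0 ∧
      A = (x + a) * (x + b) * (x + c) * (x + u) / ((2 * x + u) * (2 * x + u + 1))) ∨
      (A = 0 ∧ c = -x)) (k : ℕ) :
    A * (tb u (x + 1) (k + 1) - tb u x (k + 1)) + C * (tb u (x - 1) (k + 1) - tb u x (k + 1)) =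
      ((k : ℝ) + 1) * (k + 1 + v) * tb u x (k + 1)
        - ((k : ℝ) + 1) * (a + k) * (b + k) * (c + k) * tb u x k := by
  have hC' : C * ((2 * x + u - 1) * (2 * x + u)) =
      x * (x + u - a) * (x + u - b) * (x + u - c) := by
    rw [hC, div_mul_cancel₀ _ (mul_ne_zero h1 h2)]
  have hA' : (2 * x + u + 1 ≠ 0 ∧ A * ((2 * x + u) * (2 * x + u + 1)) =
      (x + a) * (x + b) * (x + c) * (x + u)) ∨ (A = 0 ∧ c = -x) := by
    rcases hA with ⟨h3, hA⟩ | h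
    · exact Or.inl ⟨h3, by rw [hA, div_mul_cancel₀ _ (mul_ne_zero h2 h3)]⟩
    · exact Or.inr h
  clear hC hA
  rcases k with _ | j
  · simp only [tb, poch_succ, poch_zero, Nat.cast_zero]
    rcases hA' with ⟨h3, hA⟩ | ⟨hA, hc⟩
    · apply mul_left_cancel₀ (mul_ne_zero (mul_ne_zero h1 h2) h3)
      subst hv
      linear_combination (2 * x + u - 1) *
        ((-(x + 1)) * (x + 1 + u) - (-x) * (x + u)) * hA +
        (2 * x + u + 1) * ((-(x - 1)) * (x - 1 + u) - (-x) * (x + u)) * hC'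
    · apply mul_left_cancel₀ (mul_ne_zero h1 h2)
      subst hv hA hc
      linear_combination ((-(x - 1)) * (x - 1 + u) - (-x) * (x + u)) * hC'
  · have e1 : tb u (x + 1) (j + 1 + 1) = (-x - 1) * (-x) * poch (1 - x) j *
        (poch (x + u + 1) j * (x + u + 1 + j) * (x + u + 2 + j)) := by
      unfold tb
      rw [poch_succ' (-(x + 1)), poch_succ' (-(x + 1) + 1), poch_succ (x + 1 + u),
        poch_succ (x + 1 + u)]
      rw [show -(x + 1) + 1 + 1 = 1 - x by ring, show x + 1 + u = x + u + 1 by ring]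
      push_cast; ring
    have e2 : tb u x (j + 1 + 1) = (-x) * poch (1 - x) j * (1 - x + j) *
        ((x + u) * poch (x + u + 1) j * (x + u + 1 + j)) := by
      unfold tb
      rw [poch_succ' (-x), poch_succ (-x + 1), poch_succ' (x + u), poch_succ (x + u + 1)]
      rw [show -x + 1 = 1 - x by ring]
      ring
    have e3 : tb u (x - 1) (j + 1 + 1) = poch (1 - x) j * (1 - x + j) * (2 - x + j) *
        ((x + u - 1) * (x + u) * poch (x + u + 1) j) := by
      unfold tb
      rw [poch_succ (-(x - 1)), poch_succ (-(x - 1)), poch_succ' (x - 1 + u),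
        poch_succ' (x - 1 + u + 1)]
      rw [show -(x - 1) = 1 - x by ring, show x - 1 + u + 1 + 1 = x + u + 1 by ring]
      push_cast; ring
    have e4 : tb u x (j + 1) = (-x) * poch (1 - x) j * ((x + u) * poch (x + u + 1) j) := by
      unfold tb
      rw [poch_succ' (-x), poch_succ' (x + u)]
      rw [show -x + 1 = 1 - x by ring]
    rw [e1, e2, e3, e4]
    generalize poch (1 - x) j = P
    generalize poch (x + u + 1) j = Q
    push_cast
    generalize (j : ℝ) = y
    clear e1 e2 e3 e4
    rcases hA' with ⟨h3, hA⟩ | ⟨hA, hc⟩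
    · have key : A * ((-x - 1) * (-x) * ((x + u + 1 + y) * (x + u + 2 + y)) -
            (-x) * (1 - x + y) * ((x + u) * (x + u + 1 + y))) +
          C * ((1 - x + y) * (2 - x + y) * ((x + u - 1) * (x + u)) -
            (-x) * (1 - x + y) * ((x + u) * (x + u + 1 + y))) =
          (y + 1 + 1) * (y + 1 + 1 + v) * ((-x) * (1 - x + y) * ((x + u) * (x + u + 1 + y))) -
          (y + 1 + 1) * (a + (y + 1)) * (b + (y + 1)) * (c + (y + 1)) * ((-x) * (x + u)) := by
        apply mul_left_cancel₀ (mul_ne_zero (mul_ne_zero h1 h2) h3)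
        subst hv
        linear_combination (2 * x + u - 1) * ((-x - 1) * (-x) * ((x + u + 1 + y) * (x + u + 2 + y)) -
            (-x) * (1 - x + y) * ((x + u) * (x + u + 1 + y))) * hA +
          (2 * x + u + 1) * ((1 - x + y) * (2 - x + y) * ((x + u - 1) * (x + u)) -
            (-x) * (1 - x + y) * ((x + u) * (x + u + 1 + y))) * hC'
      linear_combination P * Q * key
    · have key : 
          C * ((1 - x + y) * (2 - x + y) * ((x + u - 1) * (x + u)) -
            (-x) * (1 - x + y) * ((x + u) * (x + u + 1 + y))) =
          (y + 1 + 1) * (y + 1 + 1 + v) * ((-x) * (1 - x + y) * ((x + u) * (x + u + 1 + y))) -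
          (y + 1 + 1) * (a + (y + 1)) * (b + (y + 1)) * (c + (y + 1)) * ((-x) * (x + u)) := by
        apply mul_left_cancel₀ (mul_ne_zero h1 h2)
        subst hv hc
        linear_combination ((1 - x + y) * (2 - x + y) * ((x + u - 1) * (x + u)) -
            (-x) * (1 - x + y) * ((x + u) * (x + u + 1 + y))) * hC'
      subst hA
      linear_combination P * Q * key

lemma sum_rec (x u a b c v A C lam : ℝ) (K : ℕ) (s : ℕ → ℝ) (hv : v = a + b + c - u - 1)
    (h1 : 2 * x + u - 1 ≠ 0) (h2 : 2 * x + u ≠ 0)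
    (hC : C = x * (x + u - a) * (x + u - b) * (x + u - c) / ((2 * x + u - 1) * (2 * x + u)))
    (hA : (2 * x + u + 1 ≠ 0 ∧
      A = (x + a) * (x + b) * (x + c) * (x + u) / ((2 * x + u) * (2 * x + u + 1))) ∨
      (A = 0 ∧ c = -x))
    (hs : ∀ k < K, s (k + 1) * (((k : ℝ) + 1) * (a + k) * (b + k) * (c + k)) =
      s k * ((k : ℝ) * (k + v) - lam))
    (hK : s K * ((K : ℝ) * (K + v) - lam) = 0) :
    lam * ∑ k ∈ Finset.range (K + 1), tb u x k * s k =
      A * ∑ k ∈ Finset.range (K + 1), tb u (x + 1) k * s k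
      - (A + C) * ∑ k ∈ Finset.range (K + 1), tb u x k * s k
      + C * ∑ k ∈ Finset.range (K + 1), tb u (x - 1) k * s k := by
  have main : ∑ k ∈ Finset.range (K + 1),
      s k * (A * (tb u (x + 1) k - tb u x k) + C * (tb u (x - 1) k - tb u x k)) =
      lam * ∑ k ∈ Finset.range (K + 1), tb u x k * s k := by
    have hstep : ∀ L ≤ K, ∑ k ∈ Finset.range (L + 1),
      s k * (A * (tb u (x + 1) k - tb u x k) + C * (tb u (x - 1) k - tb u x k)) =
      lam * ∑ k ∈ Finset.range (L + 1), tb u x k * s k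
        + s L * ((L : ℝ) * (L + v) - lam) * tb u x L := by
      intro L
      induction L with
      | zero =>
        intro _
        simp only [zero_add, Finset.sum_range_one, t_rec0]
        simp; ring
      | succ L ih =>
        intro hL
        rw [Finset.sum_range_succ, ih (by omega), Finset.sum_range_succ _ (L + 1),
          t_rec x u a b c v A C hv h1 h2 hC hA L]
        push_cast
        linear_combination (-tb u x L) * hs L (by omega)
    rw [hstep K le_rfl, hK]; ring
  rw [← main]
  simp only [Finset.mul_sum, ← Finset.sum_sub_distrib, ← Finset.sum_add_distrib]
  apply Finset.sum_congr rfl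
  intro k _
  ring

lemma racah_eq (M : ℕ) (α β δ : ℝ) (n m : ℕ) (hn : n ≤ M) :
    racah M α β δ n m = ∑ k ∈ Finset.range (M + 1), 
      tb (α + β + 1) n k * (tb (δ - M) m k / 
      (poch (α + 1) k * poch (β + δ + 1) k * poch (-(M : ℝ)) k * (Nat.factorial k : ℝ))) := by
  unfold racah
  have hsub : Finset.range (n + 1) ⊆ Finset.range (M + 1) := 
    Finset.range_subset_range.mpr (by omega)
  rw [← Finset.sum_subset hsub]
  · apply Finset.sum_congr rfl
    intro k _
    unfold tb
    rw [show (n : ℝ) + α + β + 1 = n + (α + β + 1) by ring, 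
      show (m : ℝ) - M + δ = m + (δ - M) by ring]
    ring
  · intro k _ hk
    have : n < k := by simpa using hk
    unfold tb
    rw [poch_neg_nat n k this]; ring

lemma racah_eq' (M : ℕ) (α β δ : ℝ) (n m : ℕ) (hn : n ≤ M) :
    racah M α β δ n m = ∑ k ∈ Finset.range (M + 1), 
      tb (δ - M) m k * (tb (α + β + 1) n k / 
      (poch (α + 1) k * poch (β + δ + 1) k * poch (-(M : ℝ)) k * (Nat.factorial k : ℝ))) := by
  rw [racah_eq _ _ _ _ _ _ hn]
  apply Finset.sum_congr rfl
  intro k _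
  ring

lemma s_step (a b c v : ℝ) (m k : ℕ) (ha : a + (k : ℝ) ≠ 0) (hb : b + (k : ℝ) ≠ 0) 
    (hc : c + (k : ℝ) ≠ 0) :
    tb v m (k + 1) / (poch a (k + 1) * poch b (k + 1) * poch c (k + 1) * 
      (Nat.factorial (k + 1) : ℝ)) * (((k : ℝ) + 1) * (a + k) * (b + k) * (c + k)) =
    tb v m k / (poch a k * poch b k * poch c k * (Nat.factorial k : ℝ)) * 
      ((k : ℝ) * (k + v) - m * (m + v)) := by
  have hk : (k : ℝ) + 1 ≠ 0 := by positivity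
  unfold tb
  rw [poch_succ, poch_succ, poch_succ, poch_succ, poch_succ, Nat.factorial_succ]
  push_cast
  rw [div_mul_eq_mul_div, div_mul_eq_mul_div]
  rw [show poch a k * (a + k) * (poch b k * (b + k)) * (poch c k * (c + k)) * 
    (((k : ℝ) + 1) * (Nat.factorial k : ℝ)) = 
    (poch a k * poch b k * poch c k * (Nat.factorial k : ℝ)) * 
      (((k : ℝ) + 1) * (a + k) * (b + k) * (c + k)) by ring]
  rw [mul_div_mul_right _ _ (by
    exact mul_ne_zero (mul_ne_zero (mul_ne_zero hk ha) hb) hc)]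
  congr 1
  ring

lemma s_end (v X : ℝ) (m K : ℕ) (hm : m ≤ K) : 
    tb v m K / X * ((K : ℝ) * (K + v) - m * (m + v)) = 0 := by
  have : poch (-(m : ℝ)) (K + 1) = 0 := poch_neg_nat m (K + 1) (by omega)
  rw [poch_succ] at this
  unfold tb
  linear_combination poch (m + v) K / X * (m + v + K) * this

lemma racah_rec (M : ℕ) (α β δ : ℝ) (n m : ℕ) (hn : n ≤ M) (hm : m ≤ M)
    (ha : ∀ i : ℕ, i < M → α + 1 + (i : ℝ) ≠ 0) (hb : ∀ i : ℕ, i < M → β + δ + 1 + (i : ℝ) ≠ 0)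
    (h1 : 2 * (n : ℝ) + α + β < 0) (h2 : 2 * (n : ℝ) + α + β + 1 < 0)
    (h3 : n < M → 2 * (n : ℝ) + α + β + 2 < 0) :
    (m : ℝ) * (m + (δ - M)) * racah M α β δ n m =
      coeffA M α β δ n * (if n < M then racah M α β δ (n + 1) m else 0)
      - (coeffA M α β δ n + coeffC M α β δ n) * racah M α β δ n m
      + coeffC M α β δ n * racah M α β δ (n - 1) m := by
  have hR := sum_rec (n : ℝ) (α + β + 1) (α + 1) (β + δ + 1) (-(M : ℝ)) (δ - M)
    (coeffA M α β δ n) (coeffC M α β δ n) (m * (m + (δ - M))) M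
    (fun k => tb (δ - M) m k / 
      (poch (α + 1) k * poch (β + δ + 1) k * poch (-(M : ℝ)) k * (Nat.factorial k : ℝ)))
    (by ring) (by intro h; linarith) (by intro h; linarith)
    (by unfold coeffC; congr 1 <;> ring)
    (by
      rcases Nat.lt_or_ge n M with h | h
      · left
        have := h3 h
        refine ⟨by intro h'; linarith, ?_⟩
        unfold coeffA; congr 1 <;> ring
      · right
        have : n = M := by omega
        subst this
        exact ⟨by simp [coeffA], rfl⟩)
    (fun k hk => s_step _ _ _ _ m k (ha k hk) (hb k hk) (by
      have : (k : ℝ) < M := by exact_mod_cast hk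
      intro h; linarith))
    (s_end _ _ m M hm)
  rw [← racah_eq M α β δ n m hn] at hR
  rw [hR]
  congr 1
  · congr 1
    split_ifs with h
    · rw [racah_eq M α β δ (n + 1) m h]; push_cast; rfl
    · have : n = M := by omega
      subst this
      simp [coeffA]
  · rcases n with _ | n
    · simp [coeffC]
    · rw [Nat.add_sub_cancel, racah_eq M α β δ n m (by omega)]
      push_cast
      rw [add_sub_cancel_right]

lemma racah_diff (M : ℕ) (α β δ : ℝ) (n m : ℕ) (hn : n ≤ M) (hm : m ≤ M)
    (ha : ∀ i : ℕ, i < M → α + 1 + (i : ℝ) ≠ 0) (hb : ∀ i : ℕ, i < M → β + δ + 1 + (i : ℝ) ≠ 0)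
    (h1 : 2 * (m : ℝ) + δ - M - 1 < 0) (h2 : 2 * (m : ℝ) + δ - M < 0)
    (h3 : m < M → 2 * (m : ℝ) + δ - M + 1 < 0) :
    (n : ℝ) * (n + (α + β + 1)) * racah M α β δ n m =
      coeffB M α β δ m * (if m < M then racah M α β δ n (m + 1) else 0)
      - (coeffB M α β δ m + coeffD M α β δ m) * racah M α β δ n m
      + coeffD M α β δ m * racah M α β δ n (m - 1) := by
  have hR := sum_rec (m : ℝ) (δ - M) (α + 1) (β + δ + 1) (-(M : ℝ)) (α + β + 1)
    (coeffB M α β δ m) (coeffD M α β δ m) (n * (n + (α + β + 1))) M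
    (fun k => tb (α + β + 1) n k / 
      (poch (α + 1) k * poch (β + δ + 1) k * poch (-(M : ℝ)) k * (Nat.factorial k : ℝ)))
    (by ring) (by intro h; linarith) (by intro h; linarith)
    (by unfold coeffD; congr 1 <;> ring)
    (by
      rcases Nat.lt_or_ge m M with h | h
      · left
        have := h3 h
        refine ⟨by intro h'; linarith, ?_⟩
        unfold coeffB; congr 1 <;> ring
      · right
        have : m = M := by omega
        subst this
        exact ⟨by simp [coeffB], rfl⟩)
    (fun k hk => s_step _ _ _ _ n k (ha k hk) (hb k hk) (by
      have : (k : ℝ) < M := by exact_mod_cast hk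
      intro h; linarith))
    (s_end _ _ n M hn)
  rw [← racah_eq' M α β δ n m hn] at hR
  rw [hR]
  congr 1
  · congr 1
    split_ifs with h
    · rw [racah_eq' M α β δ n (m + 1) hn]; push_cast; rfl
    · have : m = M := by omega
      subst this
      simp [coeffB]
  · rcases m with _ | m
    · simp [coeffD]
    · rw [Nat.add_sub_cancel, racah_eq' M α β δ n m hn]
      push_cast
      rw [add_sub_cancel_right]

/-- Passing from a three-term relation to its symmetrized form. -/
lemma norm_rec (A C r : ℕ → ℝ) (M n : ℕ) (lam : ℝ) (hn : n ≤ M)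
    (hpos : ∀ i < M, 0 < A i * C (i + 1)) (hC : C 0 = 0)
    (hrec : lam * r n = A n * (if n < M then r (n + 1) else 0) - (A n + C n) * r n
      + C n * r (n - 1)) :
    lam * ((∏ i ∈ Finset.range n, A i / Real.sqrt (A i * C (i + 1))) * r n) =
      Real.sqrt (A n * C (n + 1)) * (if n < M then
        (∏ i ∈ Finset.range (n + 1), A i / Real.sqrt (A i * C (i + 1))) * r (n + 1) else 0)
      - (A n + C n) * ((∏ i ∈ Finset.range n, A i / Real.sqrt (A i * C (i + 1))) * r n)
      + Real.sqrt (A (n - 1) * C n) *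
        ((∏ i ∈ Finset.range (n - 1), A i / Real.sqrt (A i * C (i + 1))) * r (n - 1)) := by
  have e1 : Real.sqrt (A n * C (n + 1)) * (if n < M then
        (∏ i ∈ Finset.range (n + 1), A i / Real.sqrt (A i * C (i + 1))) * r (n + 1) else 0) =
      (∏ i ∈ Finset.range n, A i / Real.sqrt (A i * C (i + 1))) *
        (A n * (if n < M then r (n + 1) else 0)) := by
    split_ifs with h
    · rw [Finset.prod_range_succ]
      have := Real.sqrt_pos.mpr (hpos n h)
      field_simp
    · simp
  have e2 : Real.sqrt (A (n - 1) * C n) *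
        ((∏ i ∈ Finset.range (n - 1), A i / Real.sqrt (A i * C (i + 1))) * r (n - 1)) =
      (∏ i ∈ Finset.range n, A i / Real.sqrt (A i * C (i + 1))) * (C n * r (n - 1)) := by
    rcases n with _ | n
    · simp [hC]
    · rw [Nat.add_sub_cancel, Finset.prod_range_succ]
      have hp := hpos n (by omega)
      have h1 := Real.sqrt_pos.mpr hp
      have h2 := Real.mul_self_sqrt hp.le
      have h3 : Real.sqrt (A n * C (n + 1)) =
          A n / Real.sqrt (A n * C (n + 1)) * C (n + 1) := by
        field_simp
        nlinarith
      generalize (∏ i ∈ Finset.range n, A i / Real.sqrt (A i * C (i + 1))) = P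
      linear_combination P * r n * h3
  rw [e1, e2]
  linear_combination (∏ i ∈ Finset.range n, A i / Real.sqrt (A i * C (i + 1))) * hrec

lemma pos_ab (M : ℕ) (α β δ : ℝ) (h : PosCond M α β δ) :
    (∀ i : ℕ, i < M → α + 1 + (i : ℝ) ≠ 0) ∧ (∀ i : ℕ, i < M → β + δ + 1 + (i : ℝ) ≠ 0) := by
  constructor <;>
  · intro i hi h0
    have := h.1 i hi
    have hA : coeffA M α β δ i = 0 := by
      unfold coeffA
      first
        | rw [show (i : ℝ) + α + 1 = 0 by linarith]; simp
        | rw [show (i : ℝ) + β + δ + 1 = 0 by linarith]; simp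
    rw [hA] at this
    simp at this

lemma Pfun_rec (M : ℕ) (α β δ : ℝ) (n m : ℕ) (hn : n ≤ M) (hm : m ≤ M)
    (h : PosCond M α β δ)
    (h1 : 2 * (n : ℝ) + α + β < 0) (h2 : 2 * (n : ℝ) + α + β + 1 < 0)
    (h3 : n < M → 2 * (n : ℝ) + α + β + 2 < 0) :
    (m : ℝ) * (m + (δ - M)) * Pfun M α β δ n m =
      Real.sqrt (coeffA M α β δ n * coeffC M α β δ (n + 1)) *
        (if n < M then Pfun M α β δ (n + 1) m else 0)
      - (coeffA M α β δ n + coeffC M α β δ n) * Pfun M α β δ n m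
      + Real.sqrt (coeffA M α β δ (n - 1) * coeffC M α β δ n) * Pfun M α β δ (n - 1) m := by
  have hab := pos_ab M α β δ h
  have key := norm_rec (coeffA M α β δ) (coeffC M α β δ) (fun n => racah M α β δ n m) M n _ hn
    h.1 (by simp [coeffC]) (racah_rec M α β δ n m hn hm hab.1 hab.2 h1 h2 h3)
  unfold Pfun
  set κ := Real.sqrt (kappa M α β δ)
  generalize (∏ j ∈ Finset.range m,
      coeffB M α β δ j / Real.sqrt (coeffB M α β δ j * coeffD M α β δ (j + 1))) = Q
  split_ifs at key ⊢ <;> linear_combination κ * Q * key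

lemma Pfun_diff (M : ℕ) (α β δ : ℝ) (n m : ℕ) (hn : n ≤ M) (hm : m ≤ M)
    (h : PosCond M α β δ)
    (h1 : 2 * (m : ℝ) + δ - M - 1 < 0) (h2 : 2 * (m : ℝ) + δ - M < 0)
    (h3 : m < M → 2 * (m : ℝ) + δ - M + 1 < 0) :
    (n : ℝ) * (n + (α + β + 1)) * Pfun M α β δ n m =
      Real.sqrt (coeffB M α β δ m * coeffD M α β δ (m + 1)) *
        (if m < M then Pfun M α β δ n (m + 1) else 0)
      - (coeffB M α β δ m + coeffD M α β δ m) * Pfun M α β δ n m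
      + Real.sqrt (coeffB M α β δ (m - 1) * coeffD M α β δ m) * Pfun M α β δ n (m - 1) := by
  have hab := pos_ab M α β δ h
  have key := norm_rec (coeffB M α β δ) (coeffD M α β δ) (fun m => racah M α β δ n m) M m _ hm
    h.2.1 (by simp [coeffD]) (racah_diff M α β δ n m hn hm hab.1 hab.2 h1 h2 h3)
  unfold Pfun
  set κ := Real.sqrt (kappa M α β δ)
  generalize (∏ i ∈ Finset.range n,
      coeffA M α β δ i / Real.sqrt (coeffA M α β δ i * coeffC M α β δ (i + 1))) = Q
  split_ifs at key ⊢ <;> linear_combination κ * Q * key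

lemma psi_off (j0 j1 j2 j3 j4 : ℝ) (N n p : ℕ) (hp : p ≤ N)
    (hNdef : (N : ℝ) = j1 + j2 - j3 + j4 + j0) :
    psiCo j0 j1 j2 j3 j4 N (n + 1) p = Real.sqrt (
      coeffA (N - p) (-2*j2 - 1) (-2*j1 - 1) ((N : ℝ) - p - 2*j2 + 2*j3 + 1) n *
      coeffC (N - p) (-2*j2 - 1) (-2*j1 - 1) ((N : ℝ) - p - 2*j2 + 2*j3 + 1) (n + 1)) := by
  unfold psiCo coeffA coeffC
  rw [div_mul_div_comm, Nat.cast_sub hp]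
  have : j3 = j1 + j2 + j4 + j0 - N := by linarith
  subst this
  push_cast
  congr 2 <;> ring

lemma rho_off (j0 j1 j2 j3 j4 : ℝ) (N n p : ℕ) (hp : n ≤ N)
    (hNdef : (N : ℝ) = j1 + j2 - j3 + j4 + j0) :
    rhoCo j1 j2 (-j3 - 1) (-j4 - 1) j0 N n (p + 1) = Real.sqrt (
      coeffB (N - n) (-2*j0 - 1) (-2*j4 - 1) ((N : ℝ) - n - 2*j0 - 2*j1 - 1) p *
      coeffD (N - n) (-2*j0 - 1) (-2*j4 - 1) ((N : ℝ) - n - 2*j0 - 2*j1 - 1) (p + 1)) := by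
  unfold rhoCo coeffB coeffD
  rw [div_mul_div_comm, Nat.cast_sub hp]
  have : j3 = j1 + j2 + j4 + j0 - N := by linarith
  subst this
  push_cast
  congr 2 <;> ring

lemma diag_aux (P a c K E x : ℝ) (hx : x ≠ 0) (hx1 : x - 1 ≠ 0) (hs : 2 * x - 1 ≠ 0)
    (h : P * (2 * x - 1) + 2 * (K - E) * x * (x - 1) * (2 * x - 1) = -(a * (x - 1) + c * x)) :
    P / (2 * ((x - 1) * x)) + K =
      E - (a / ((2 * x - 1) * (2 * x)) + c / ((2 * (x - 1)) * (2 * x - 1))) := by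
  have e1 : P / (2 * ((x - 1) * x)) =
      P * (2 * x - 1) / (2 * x * (x - 1) * (2 * x - 1)) := by
    rw [div_eq_div_iff (by positivity) (by positivity)]; ring
  have e2 : a / ((2 * x - 1) * (2 * x)) =
      a * (x - 1) / (2 * x * (x - 1) * (2 * x - 1)) := by
    rw [div_eq_div_iff (by positivity) (by positivity)]; ring
  have e3 : c / ((2 * (x - 1)) * (2 * x - 1)) =
      c * x / (2 * x * (x - 1) * (2 * x - 1)) := by
    rw [div_eq_div_iff (by positivity) (by positivity)]; ring
  have e4 : K - E = 2 * (K - E) * x * (x - 1) * (2 * x - 1) /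
      (2 * x * (x - 1) * (2 * x - 1)) := by
    rw [eq_div_iff (by positivity)]; ring
  have e5 := congrArg (fun z => z / (2 * x * (x - 1) * (2 * x - 1))) h
  rw [add_div, neg_div, add_div, ← e1, ← e2, ← e3, ← e4] at e5
  linarith

lemma psi_diag (j0 j1 j2 j3 j4 : ℝ) (N n p : ℕ) (hp : n + p ≤ N)
    (h12 : j1 ≥ j2) (h24 : j2 ≥ j4) (hlow : j3 ≥ j1 + j2 + j0 - j4)
    (hNdef : (N : ℝ) = j1 + j2 - j3 + j4 + j0) :
    psi00 j0 j1 j2 j3 j4 n p = (j3 - j2) * (j3 - j2 + 1) -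
      (coeffA (N - p) (-2*j2 - 1) (-2*j1 - 1) ((N : ℝ) - p - 2*j2 + 2*j3 + 1) n +
      coeffC (N - p) (-2*j2 - 1) (-2*j1 - 1) ((N : ℝ) - p - 2*j2 + 2*j3 + 1) n) := by
  have hc : (n : ℝ) + p ≤ N := by exact_mod_cast hp
  have hp0 : (0 : ℝ) ≤ p := p.cast_nonneg
  unfold psi00 coeffA coeffC muN muP mcc
  rw [Nat.cast_sub (by omega)]
  by_cases he : (n : ℝ) = j1 + j2
  · have e1 : j1 = j4 := by linarith
    have e2 : j2 = j4 := by linarith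
    have e3 : (p : ℝ) = 0 := by linarith
    have e4 : j3 = j4 + j0 := by linarith
    have e5 : (N : ℝ) = j4 + j4 := by linarith
    rw [he, e5, e3]
    subst e1 e4
    rw [e2]
    ring_nf
  · have : j3 = j1 + j2 + j4 + j0 - N := by linarith
    have hlt : (n : ℝ) < j1 + j2 := lt_of_le_of_ne (by linarith) he
    have d1 : (n : ℝ) - j1 - j2 ≠ 0 := by intro h; linarith
    have d2 : (n : ℝ) - j1 - j2 - 1 ≠ 0 := by intro h; linarith
    rw [show 2 * (n : ℝ) + (-2*j2 - 1) + (-2*j1 - 1) + 1 = 2 * ((n : ℝ) - j1 - j2) - 1 by ring,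
      show 2 * (n : ℝ) + (-2*j2 - 1) + (-2*j1 - 1) + 2 = 2 * ((n : ℝ) - j1 - j2) by ring,
      show 2 * (n : ℝ) + (-2*j2 - 1) + (-2*j1 - 1) = 2 * ((n : ℝ) - j1 - j2 - 1) by ring,
      show (n : ℝ) - j1 - j2 - 1 = ((n : ℝ) - j1 - j2) - 1 by ring, add_assoc (_ / _)]
    apply diag_aux _ _ _ _ _ _ d1 d2 (by intro h; linarith)
    subst this
    ring

lemma rho_diag (j0 j1 j2 j3 j4 : ℝ) (N n p : ℕ) (hp : n + p ≤ N)
    (h12 : j1 ≥ j2) (h24 : j2 ≥ j4) (h04 : j0 ≥ j4) (hlow : j3 ≥ j1 + j2 + j0 - j4)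
    (hNdef : (N : ℝ) = j1 + j2 - j3 + j4 + j0) :
    rho00 j1 j2 (-j3 - 1) (-j4 - 1) j0 n p = (j0 + j4) * (j0 + j4 + 1) -
      (coeffB (N - n) (-2*j0 - 1) (-2*j4 - 1) ((N : ℝ) - n - 2*j0 - 2*j1 - 1) p +
      coeffD (N - n) (-2*j0 - 1) (-2*j4 - 1) ((N : ℝ) - n - 2*j0 - 2*j1 - 1) p) := by
  have hc : (n : ℝ) + p ≤ N := by exact_mod_cast hp
  have hp0 : (0 : ℝ) ≤ n := n.cast_nonneg
  unfold rho00 coeffB coeffD muN muP mcc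
  rw [Nat.cast_sub (by omega)]
  by_cases he : (p : ℝ) = j0 + j1
  · have e1 : j1 = j4 := by linarith
    have e2 : j2 = j4 := by linarith
    have e6 : j0 = j4 := by linarith
    have e3 : (n : ℝ) = 0 := by linarith
    have e4 : j3 = j4 + j4 := by linarith
    have e5 : (N : ℝ) = j4 + j4 := by linarith
    rw [he, e5, e3, e4, e1, e2, e6]
    ring_nf
  · have : j3 = j1 + j2 + j4 + j0 - N := by linarith
    have hlt : (p : ℝ) < j0 + j1 := lt_of_le_of_ne (by linarith) he
    have d1 : (p : ℝ) - j1 - j0 ≠ 0 := by intro h; linarith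
    have d2 : (p : ℝ) - j1 - j0 - 1 ≠ 0 := by intro h; linarith
    rw [show 2 * (p : ℝ) - (N - n) + ((N : ℝ) - n - 2*j0 - 2*j1 - 1) =
        2 * ((p : ℝ) - j1 - j0) - 1 by ring,
      show 2 * ((p : ℝ) - j1 - j0) - 1 + 1 = 2 * ((p : ℝ) - j1 - j0) by ring,
      show 2 * (p : ℝ) - (N - n) - 1 + ((N : ℝ) - n - 2*j0 - 2*j1 - 1) =
        2 * ((p : ℝ) - j1 - j0 - 1) by ring, add_assoc (_ / _)]
    apply diag_aux _ _ _ _ _ _ d1 d2 (by intro h; linarith)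
    subst this
    ring

/-- Recurrence and difference relations for the Tratnik functions.  In (ii) the
coefficients `ρ`, `ρ⁰⁰` are evaluated at the substituted parameters
`𝔯²𝑱 = (j⁽²⁾, −j⁽³⁾−1, −j⁽⁴⁾−1, j⁽⁰⁾, j⁽¹⁾)`; terms whose indices fall outside the
admissible range vanish (the Tratnik function is `0` there, and `ψ_{0,·} = 0`,
`ρ_{·,0} = 0` by convention of the nonnegative square root). -/
theorem stmt17 (j0 j1 j2 j3 j4 : ℝ) (N : ℕ)
    (h12 : j1 ≥ j2) (h24 : j2 ≥ j4) (h04 : j0 ≥ j4)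
    (h0 : j0 ≥ 0) (h1 : j1 ≥ 0) (h2 : j2 ≥ 0) (h3 : j3 ≥ 0) (h4 : j4 ≥ 0)
    (hup : j1 + j2 + j0 + j4 ≥ j3) (hlow : j3 ≥ j1 + j2 + j0 - j4)
    (hN : 0 < N) (hNdef : (N : ℝ) = j1 + j2 - j3 + j4 + j0)
    (hpos1 : ∀ n2 : ℕ, n2 ≤ N →
      PosCond (N - n2) (-2*j2 - 1) (-2*j1 - 1) ((N : ℝ) - n2 - 2*j2 + 2*j3 + 1))
    (hpos2 : ∀ m1 : ℕ, m1 ≤ N →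
      PosCond (N - m1) (-2*j0 - 1) (-2*j4 - 1) ((N : ℝ) - m1 - 2*j0 - 2*j1 - 1)) :
    ∀ n1 n2 m1 m2 : ℕ, n1 + n2 ≤ N → m1 + m2 ≤ N →
      (((m1 : ℝ) - j2 + j3) * ((m1 : ℝ) - j2 + j3 + 1) *
          Tratnik j0 j1 j2 j3 j4 N n1 n2 m1 m2 =
        psiCo j0 j1 j2 j3 j4 N (n1 + 1) n2 * Tratnik j0 j1 j2 j3 j4 N (n1 + 1) n2 m1 m2
        + psi00 j0 j1 j2 j3 j4 n1 n2 * Tratnik j0 j1 j2 j3 j4 N n1 n2 m1 m2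
        + psiCo j0 j1 j2 j3 j4 N n1 n2 * Tratnik j0 j1 j2 j3 j4 N (n1 - 1) n2 m1 m2) ∧
      (((n2 : ℝ) - j0 - j4 - 1) * ((n2 : ℝ) - j0 - j4) *
          Tratnik j0 j1 j2 j3 j4 N n1 n2 m1 m2 =
        rhoCo j1 j2 (-j3 - 1) (-j4 - 1) j0 N m1 (m2 + 1) *
            Tratnik j0 j1 j2 j3 j4 N n1 n2 m1 (m2 + 1)
        + rho00 j1 j2 (-j3 - 1) (-j4 - 1) j0 m1 m2 *
            Tratnik j0 j1 j2 j3 j4 N n1 n2 m1 m2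
        + rhoCo j1 j2 (-j3 - 1) (-j4 - 1) j0 N m1 m2 *
            Tratnik j0 j1 j2 j3 j4 N n1 n2 m1 (m2 - 1)) := by
  intro n1 n2 m1 m2 hn hm
  by_cases hnm : n2 + m1 ≤ N
  swap
  · have hz : ∀ a b, Tratnik j0 j1 j2 j3 j4 N a n2 m1 b = 0 := by
      intro a b
      unfold Tratnik
      rw [if_neg (by omega)]
    simp [hz]
  have hn2 : n2 ≤ N := by omega
  have hm1 : m1 ≤ N := by omega
  have hnR : (n1 : ℝ) + n2 ≤ N := by exact_mod_cast hn
  have hmR : (m1 : ℝ) + m2 ≤ N := by exact_mod_cast hm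
  have hn2R : (0 : ℝ) ≤ n2 := n2.cast_nonneg
  have hm1R : (0 : ℝ) ≤ m1 := m1.cast_nonneg
  have hT : Tratnik j0 j1 j2 j3 j4 N n1 n2 m1 m2 =
    Pfun (N - n2) (-2*j2 - 1) (-2*j1 - 1) ((N : ℝ) - n2 - 2*j2 + 2*j3 + 1) n1 m1 *
      Pfun (N - m1) (-2*j0 - 1) (-2*j4 - 1) ((N : ℝ) - m1 - 2*j0 - 2*j1 - 1) n2 m2 := by
    unfold Tratnik
    rw [if_pos ⟨hn, hm, hnm⟩]
  constructor
  · have hT1 : Tratnik j0 j1 j2 j3 j4 N (n1 + 1) n2 m1 m2 = 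
        (if n1 < N - n2 then
          Pfun (N - n2) (-2*j2 - 1) (-2*j1 - 1) ((N : ℝ) - n2 - 2*j2 + 2*j3 + 1) (n1 + 1) m1 
          else 0) *
        Pfun (N - m1) (-2*j0 - 1) (-2*j4 - 1) ((N : ℝ) - m1 - 2*j0 - 2*j1 - 1) n2 m2 := by
      unfold Tratnik
      by_cases h : n1 < N - n2
      · rw [if_pos (by omega), if_pos h]
      · rw [if_neg (by omega), if_neg h, zero_mul]
    have hT2 : Tratnik j0 j1 j2 j3 j4 N (n1 - 1) n2 m1 m2 =
        Pfun (N - n2) (-2*j2 - 1) (-2*j1 - 1) ((N : ℝ) - n2 - 2*j2 + 2*j3 + 1) (n1 - 1) m1 *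
        Pfun (N - m1) (-2*j0 - 1) (-2*j4 - 1) ((N : ℝ) - m1 - 2*j0 - 2*j1 - 1) n2 m2 := by
      unfold Tratnik
      rw [if_pos (by omega)]
    have hpsi : psiCo j0 j1 j2 j3 j4 N n1 n2 = Real.sqrt (
      coeffA (N - n2) (-2*j2 - 1) (-2*j1 - 1) ((N : ℝ) - n2 - 2*j2 + 2*j3 + 1) (n1 - 1) *
      coeffC (N - n2) (-2*j2 - 1) (-2*j1 - 1) ((N : ℝ) - n2 - 2*j2 + 2*j3 + 1) n1) := by
      rcases n1 with _ | n
      · simp [psiCo, coeffC]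
      · exact psi_off j0 j1 j2 j3 j4 N n n2 hn2 hNdef
    have key := Pfun_rec (N - n2) (-2*j2 - 1) (-2*j1 - 1) ((N : ℝ) - n2 - 2*j2 + 2*j3 + 1) n1 m1
      (by omega) (by omega) (hpos1 n2 hn2) (by linarith) (by linarith)
      (by
        intro h
        have : n1 + n2 + 1 ≤ N := by omega
        have : (n1 : ℝ) + n2 + 1 ≤ N := by exact_mod_cast this
        linarith)
    rw [hT, hT1, hT2, hpsi, psi_off j0 j1 j2 j3 j4 N n1 n2 hn2 hNdef,
      psi_diag j0 j1 j2 j3 j4 N n1 n2 hn h12 h24 hlow hNdef]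
    rw [Nat.cast_sub hn2] at key
    linear_combination 
      Pfun (N - m1) (-2*j0 - 1) (-2*j4 - 1) ((N : ℝ) - m1 - 2*j0 - 2*j1 - 1) n2 m2 * key
  · have hT1 : Tratnik j0 j1 j2 j3 j4 N n1 n2 m1 (m2 + 1) = 
        Pfun (N - n2) (-2*j2 - 1) (-2*j1 - 1) ((N : ℝ) - n2 - 2*j2 + 2*j3 + 1) n1 m1 *
        (if m2 < N - m1 then
        Pfun (N - m1) (-2*j0 - 1) (-2*j4 - 1) ((N : ℝ) - m1 - 2*j0 - 2*j1 - 1) n2 (m2 + 1)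
          else 0) := by
      unfold Tratnik
      by_cases h : m2 < N - m1
      · rw [if_pos (by omega), if_pos h]
      · rw [if_neg (by omega), if_neg h, mul_zero]
    have hT2 : Tratnik j0 j1 j2 j3 j4 N n1 n2 m1 (m2 - 1) =
        Pfun (N - n2) (-2*j2 - 1) (-2*j1 - 1) ((N : ℝ) - n2 - 2*j2 + 2*j3 + 1) n1 m1 *
        Pfun (N - m1) (-2*j0 - 1) (-2*j4 - 1) ((N : ℝ) - m1 - 2*j0 - 2*j1 - 1) n2 (m2 - 1) := by
      unfold Tratnik
      rw [if_pos (by omega)]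
    have hrho : rhoCo j1 j2 (-j3 - 1) (-j4 - 1) j0 N m1 m2 = Real.sqrt (
      coeffB (N - m1) (-2*j0 - 1) (-2*j4 - 1) ((N : ℝ) - m1 - 2*j0 - 2*j1 - 1) (m2 - 1) *
      coeffD (N - m1) (-2*j0 - 1) (-2*j4 - 1) ((N : ℝ) - m1 - 2*j0 - 2*j1 - 1) m2) := by
      rcases m2 with _ | m
      · simp [rhoCo, coeffD]
      · exact rho_off j0 j1 j2 j3 j4 N m1 m hm1 hNdef
    have hcast : ((N - m1 : ℕ) : ℝ) = N - m1 := Nat.cast_sub hm1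
    have key := Pfun_diff (N - m1) (-2*j0 - 1) (-2*j4 - 1) ((N : ℝ) - m1 - 2*j0 - 2*j1 - 1) n2 m2
      (by omega) (by omega) (hpos2 m1 hm1) (by rw [hcast]; linarith) (by rw [hcast]; linarith)
      (by
        intro h
        have : m1 + m2 + 1 ≤ N := by omega
        have : (m1 : ℝ) + m2 + 1 ≤ N := by exact_mod_cast this
        rw [hcast]
        linarith)
    rw [hT, hT1, hT2, hrho, rho_off j0 j1 j2 j3 j4 N m1 m2 hm1 hNdef,
      rho_diag j0 j1 j2 j3 j4 N m1 m2 hm h12 h24 h04 hlow hNdef]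
    linear_combination 
      Pfun (N - n2) (-2*j2 - 1) (-2*j1 - 1) ((N : ℝ) - n2 - 2*j2 + 2*j3 + 1) n1 m1 * key
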